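/- arXiv:1801.00247 — 4 statements merged into one kernel-verified Lean document; each statement's English description precedes it below -/
import Mathlib

section
/- Let p be a prime, n ≥ 1, and r = n·p. In the free ℤ-module M = (Fin r → ℤ) with standard basis vectors e_i, let K be the submodule {c : ∑ i, c i = 0} (degree-zero divisors supported on the branch points) and let N ⊆ K be the submodule generated by the elements p • (e i − e j) for all i, j and (∑ k, e k) − r • e i for all i (the relations p·a_i − p·a_j = 0 and a_1 + ⋯ + a_r = r·a_i holding on a p-gonal surface). Then the quotient K ⧸ N is isomorphic as an additive group to (Fin (r−2) → ZMod p); in particular it has cardinality p^{r−2}. (This is the statement J_p* ≅ (ℤ/p)^{r−2} for a p-gonal surface with r = np branch points, and hence that there are exactly p^{r−2} p-spin structures, and m-spin structures for any multiple m of p dividing 2g−2, supported on the branch set.) -/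
/-!
Put `d = gcd p r`. A divisor `c` of degree zero decomposes, for any branch point `a`, as
`c = c_a • (∑ e_k - r • e_a) + ∑ (c_k - c_a) • (e_k - e_a)`, and Bézout's identity puts
`d • (e_k - e_a)` among the relations. Hence the relations are exactly the divisors of degree zero
whose coefficients are all congruent modulo `d`. The differences `c_k - c_0` modulo `d`, with `k`
running over all indices but the first and the last, therefore identify the quotient with
`(ℤ/d)^(r-2)`: the degree fixes the last coefficient, and because `d ∣ r` it also makes the last
difference vanish modulo `d` as soon as the others do.
-/

section Decomposition

variable {R ι : Type*} [CommRing R] [Fintype ι]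

theorem eq_smul_sub_add_sum_smul_sub_of_sum_eq_zero [DecidableEq ι] {c : ι → R}
    (hc : ∑ i, c i = 0) (a : ι) :
    c = c a • ((∑ k, (Pi.single k 1 : ι → R)) - (Fintype.card ι : R) • Pi.single a 1) +
      ∑ k, (c k - c a) • ((Pi.single k 1 : ι → R) - Pi.single a 1) := by
  have hexpand : ∑ k, c k • (Pi.single k 1 : ι → R) = c := by
    simpa only [Pi.single_apply, eq_comm] using (pi_eq_sum_univ' c).symm
  simp only [smul_sub, sub_smul, Finset.sum_sub_distrib, ← Finset.sum_smul, ← Finset.smul_sum,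
    hexpand, hc, Finset.sum_const, Finset.card_univ]
  module

theorem dvd_sub_of_forall_ne_of_sum_eq_zero {d : R} (hd : d ∣ (Fintype.card ι : R))
    {c : ι → R} (hc : ∑ i, c i = 0) {a b : ι} (h : ∀ i, i ≠ b → d ∣ c i - c a) (i : ι) :
    d ∣ c i - c a := by
  have hsum : d ∣ ∑ j, (c j - c a) := by
    simpa [Finset.sum_sub_distrib, hc] using hd.mul_right (c a)
  rcases eq_or_ne i b with rfl | hib
  · classical
    rw [← Finset.add_sum_erase _ _ (Finset.mem_univ i)] at hsum
    exact (dvd_add_left (Finset.dvd_sum fun j hj => h j (Finset.ne_of_mem_erase hj))).1 hsum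
  · exact h i hib

end Decomposition

/-- The relations among divisors supported on the branch points, indexed by `ι`: the subgroup
generated by the `p·a_i - p·a_j` and the `(∑ a_k) - |ι|·a_i`, with `a_i` encoded as
`Pi.single i 1`. -/
def branchRelations (p : ℕ) (ι : Type*) [Fintype ι] [DecidableEq ι] : Submodule ℤ (ι → ℤ) :=
  Submodule.span ℤ
    ((Set.range fun ij : ι × ι =>
        (p : ℤ) • ((Pi.single ij.1 1 : ι → ℤ) - Pi.single ij.2 1)) ∪
      (Set.range fun i : ι =>
        (∑ k, (Pi.single k 1 : ι → ℤ)) - (Fintype.card ι : ℤ) • Pi.single i 1))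

section Relations

variable {ι : Type*} [Fintype ι] [DecidableEq ι]

theorem smul_single_sub_single_mem_branchRelations (p : ℕ) (i j : ι) :
    (p : ℤ) • ((Pi.single i 1 : ι → ℤ) - Pi.single j 1) ∈ branchRelations p ι :=
  Submodule.subset_span (Or.inl ⟨(i, j), rfl⟩)

theorem sum_single_sub_smul_single_mem_branchRelations (p : ℕ) (i : ι) :
    (∑ k, (Pi.single k 1 : ι → ℤ)) - (Fintype.card ι : ℤ) • Pi.single i 1 ∈
      branchRelations p ι :=
  Submodule.subset_span (Or.inr ⟨i, rfl⟩)

theorem gcd_smul_single_sub_single_mem_branchRelations (p : ℕ) (i j : ι) :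
    (p.gcd (Fintype.card ι) : ℤ) • ((Pi.single i 1 : ι → ℤ) - Pi.single j 1) ∈
      branchRelations p ι := by
  have hcard : (Fintype.card ι : ℤ) • ((Pi.single i 1 : ι → ℤ) - Pi.single j 1) ∈
      branchRelations p ι := by
    convert sub_mem (sum_single_sub_smul_single_mem_branchRelations p j)
      (sum_single_sub_smul_single_mem_branchRelations p i) using 1
    module
  rw [Nat.gcd_eq_gcd_ab, add_smul, mul_comm (p : ℤ), mul_smul,
    mul_comm (Fintype.card ι : ℤ), mul_smul]
  exact add_mem
    (Submodule.smul_mem _ _ (smul_single_sub_single_mem_branchRelations p i j))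
    (Submodule.smul_mem _ _ hcard)

theorem sum_eq_zero_of_mem_branchRelations {p : ℕ} {c : ι → ℤ}
    (hc : c ∈ branchRelations p ι) : ∑ i, c i = 0 := by
  induction hc using Submodule.span_induction with
  | mem x hx => rcases hx with ⟨ij, rfl⟩ | ⟨i, rfl⟩ <;> simp [← Finset.mul_sum]
  | zero => simp
  | add x y _ _ hx hy => simp [Finset.sum_add_distrib, hx, hy]
  | smul t x _ hx => simp [← Finset.mul_sum, hx]

theorem gcd_dvd_sub_of_mem_branchRelations {p : ℕ} {c : ι → ℤ}
    (hc : c ∈ branchRelations p ι) (i j : ι) :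
    (p.gcd (Fintype.card ι) : ℤ) ∣ c i - c j := by
  have hp : (p.gcd (Fintype.card ι) : ℤ) ∣ p := mod_cast Nat.gcd_dvd_left _ _
  have hcard : (p.gcd (Fintype.card ι) : ℤ) ∣ Fintype.card ι := mod_cast Nat.gcd_dvd_right _ _
  induction hc using Submodule.span_induction with
  | mem x hx =>
    rcases hx with ⟨kl, rfl⟩ | ⟨k, rfl⟩
    · exact dvd_sub (hp.mul_right _) (hp.mul_right _)
    · simpa [← mul_sub] using hcard.mul_right _
  | zero => simp
  | add x y _ _ hx hy => simpa only [Pi.add_apply, add_sub_add_comm] using dvd_add hx hy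
  | smul t x _ hx =>
    simpa only [Pi.smul_apply, smul_eq_mul, ← mul_sub] using hx.mul_left t

theorem mem_branchRelations_iff {p : ℕ} {c : ι → ℤ} :
    c ∈ branchRelations p ι ↔
      ∑ i, c i = 0 ∧ ∀ i j, (p.gcd (Fintype.card ι) : ℤ) ∣ c i - c j := by
  refine ⟨fun hc => ⟨sum_eq_zero_of_mem_branchRelations hc,
    gcd_dvd_sub_of_mem_branchRelations hc⟩, fun ⟨hsum, hdvd⟩ => ?_⟩
  rcases isEmpty_or_nonempty ι with _ | ⟨⟨a⟩⟩
  · exact Subsingleton.elim 0 c ▸ zero_mem _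
  · rw [eq_smul_sub_add_sum_smul_sub_of_sum_eq_zero hsum a]
    refine add_mem
      (Submodule.smul_mem _ _ (sum_single_sub_smul_single_mem_branchRelations p a))
      (sum_mem fun k _ => ?_)
    obtain ⟨t, ht⟩ := hdvd k a
    rw [ht, mul_comm, mul_smul]
    exact Submodule.smul_mem _ _ (gcd_smul_single_sub_single_mem_branchRelations p k a)

end Relations

/-- The differences `c_k - c_0` modulo `d`, for all indices `k` except the first and the last; on
divisors of degree zero its kernel is `branchRelations` when `d = gcd p (m + 2)`. -/
def differencesMod (d m : ℕ) : (Fin (m + 2) → ℤ) →ₗ[ℤ] (Fin m → ZMod d) :=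
  LinearMap.pi fun i =>
    (Int.castAddHom (ZMod d)).toIntLinearMap ∘ₗ
      (LinearMap.proj (R := ℤ) (φ := fun _ => ℤ) i.succ.castSucc - LinearMap.proj 0)

theorem differencesMod_apply (d m : ℕ) (c : Fin (m + 2) → ℤ) (i : Fin m) :
    differencesMod d m c i = ((c i.succ.castSucc - c 0 : ℤ) : ZMod d) :=
  rfl

theorem exists_sum_eq_zero_differencesMod_eq {d m : ℕ} (w : Fin m → ZMod d) :
    ∃ c : Fin (m + 2) → ℤ, ∑ i, c i = 0 ∧ differencesMod d m c = w := by
  choose lift hlift using fun i => ZMod.intCast_surjective (w i)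
  let t : Fin (m + 1) → ℤ := Fin.cons 0 lift
  let c : Fin (m + 2) → ℤ := Fin.snoc t (-∑ i, t i)
  have hc (i : Fin (m + 1)) : c i.castSucc = t i := Fin.snoc_castSucc ..
  have hc_zero : c 0 = 0 := hc 0
  refine ⟨c, ?_, funext fun i => ?_⟩
  · simp [c, Fin.sum_univ_castSucc]
  · rw [differencesMod_apply, hc, hc_zero, sub_zero]
    exact hlift i

theorem differencesMod_eq_zero_iff {d m : ℕ} (hd : d ∣ m + 2) {c : Fin (m + 2) → ℤ}
    (hc : ∑ i, c i = 0) : differencesMod d m c = 0 ↔ ∀ i j, (d : ℤ) ∣ c i - c j := by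
  simp only [funext_iff, differencesMod_apply, Pi.zero_apply, ZMod.intCast_zmod_eq_zero_iff_dvd]
  refine ⟨fun h i j => ?_, fun h i => h _ _⟩
  have hne_last (k : Fin (m + 2)) (hk : k ≠ Fin.last (m + 1)) : (d : ℤ) ∣ c k - c 0 := by
    obtain ⟨k, rfl⟩ := Fin.exists_castSucc_eq.2 hk
    cases k using Fin.cases with
    | zero => simp
    | succ k => exact h k
  have hcard : (d : ℤ) ∣ Fintype.card (Fin (m + 2)) := by
    rw [Fintype.card_fin]
    exact mod_cast hd
  have hzero := dvd_sub_of_forall_ne_of_sum_eq_zero hcard hc hne_last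
  simpa only [sub_sub_sub_cancel_right] using dvd_sub (hzero i) (hzero j)

theorem differencesMod_eq_zero_iff_mem_branchRelations {p m : ℕ} {c : Fin (m + 2) → ℤ}
    (hc : ∑ i, c i = 0) :
    differencesMod (p.gcd (m + 2)) m c = 0 ↔ c ∈ branchRelations p (Fin (m + 2)) := by
  rw [differencesMod_eq_zero_iff (Nat.gcd_dvd_right _ _) hc, mem_branchRelations_iff,
    Fintype.card_fin, and_iff_right hc]

theorem p_torsion_branch_presentation_general (p r : ℕ) (hr : 2 ≤ r)
    (e : Fin r → (Fin r → ℤ)) (he : ∀ i, e i = Pi.single i 1)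
    (K : Submodule ℤ (Fin r → ℤ)) (hK : ∀ c : Fin r → ℤ, c ∈ K ↔ ∑ i, c i = 0)
    (N : Submodule ℤ (Fin r → ℤ))
    (hN : N = Submodule.span ℤ
        ((Set.range fun ij : Fin r × Fin r => (p : ℤ) • (e ij.1 - e ij.2)) ∪
          (Set.range fun i : Fin r => (∑ k, e k) - (r : ℤ) • e i))) :
    Nonempty ((↥K ⧸ Submodule.comap K.subtype N) ≃+ (Fin (r - 2) → ZMod (p.gcd r))) ∧
      Nat.card (↥K ⧸ Submodule.comap K.subtype N) = p.gcd r ^ (r - 2) := by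
  obtain ⟨m, rfl⟩ := Nat.exists_eq_add_of_le' hr
  obtain rfl : N = branchRelations p (Fin (m + 2)) := by
    simp only [hN, he, branchRelations, Fintype.card_fin]
  let f := differencesMod (p.gcd (m + 2)) m ∘ₗ K.subtype
  have hker : Submodule.comap K.subtype (branchRelations p (Fin (m + 2))) = LinearMap.ker f :=
    Submodule.ext fun c =>
      (differencesMod_eq_zero_iff_mem_branchRelations ((hK c).1 c.2)).symm
  have hsurj : Function.Surjective f := fun w =>
    let ⟨c, hc, hw⟩ := exists_sum_eq_zero_differencesMod_eq w
    ⟨⟨c, (hK c).2 hc⟩, hw⟩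
  let E := (Submodule.quotEquivOfEq _ _ hker).trans (f.quotKerEquivOfSurjective hsurj)
  refine ⟨⟨E.toAddEquiv⟩, ?_⟩
  rw [Nat.card_congr E.toEquiv, Nat.card_fun, Nat.card_zmod, Nat.card_fin, Nat.add_sub_cancel]

/-- `J_p* ≅ (ℤ/p)^{r-2}` for a `p`-gonal surface with `r = n·p` branch points:
the degree-zero divisors supported on the branch points, modulo the relations
`p·a_i = p·a_j` and `a_1 + ⋯ + a_r = r·a_i`, form a group isomorphic to
`(ZMod p)^{r-2}`; in particular it has cardinality `p^{r-2}`. -/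
theorem p_torsion_branch_presentation (p n : ℕ) (hp : p.Prime) (hn : 1 ≤ n)
    (r : ℕ) (hr : r = n * p)
    (e : Fin r → (Fin r → ℤ)) (he : ∀ i, e i = Pi.single i 1)
    (K : Submodule ℤ (Fin r → ℤ)) (hK : ∀ c : Fin r → ℤ, c ∈ K ↔ ∑ i, c i = 0)
    (N : Submodule ℤ (Fin r → ℤ))
    (hN : N = Submodule.span ℤ
        ((Set.range fun ij : Fin r × Fin r => (p : ℤ) • (e ij.1 - e ij.2)) ∪
          (Set.range fun i : Fin r => (∑ k, e k) - (r : ℤ) • e i))) :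
    Nonempty ((↥K ⧸ Submodule.comap K.subtype N) ≃+ (Fin (r - 2) → ZMod p)) ∧
      Nat.card (↥K ⧸ Submodule.comap K.subtype N) = p ^ (r - 2) := by
  have h2 : 2 ≤ r := hr ▸ hp.two_le.trans (Nat.le_mul_of_pos_left p hn)
  have hgcd : p.gcd r = p := Nat.gcd_eq_left (hr ▸ dvd_mul_left p n)
  have hgeneral := p_torsion_branch_presentation_general p r h2 e he K hK N hN
  rwa [hgcd] at hgeneral
end

section
/- Let g ≥ 1 and 1 ≤ k ≤ g+1, and let σ be a permutation of Fin (2g+2) with σ ∘ σ = id having exactly 2k fixed points. Then the subgroup of σ*-fixed elements {y ∈ J : σ* y = y} has cardinality 2^{g+k−1}. (This is the statement that for a hyperelliptic surface of genus g defined by a real polynomial with exactly 2k real branch points and not all branch points real, the anti-holomorphic involution τ induced by complex conjugation fixes exactly 2^{g+k−1} two-spin structures; equivalently, the Klein surface X/⟨τ⟩ has exactly 2^{g+k−1} two-spin structures.) -/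
/-!
A class in `V ⧸ W` is fixed when `x ∘ σ - x` is a constant function. At a fixed point of `σ` this
constant is `0`, so the fixed classes are exactly the classes of `σ`-invariant functions with sum
zero. Let `A` be a finite abelian group of values, here `ℤ/2`, in which the constants have sum zero.
Invariant functions are functions on the set of cycles of `σ`; since the sum takes every value on
functions supported at a fixed point, the sum-zero condition divides their number by `|A|`, and
passing to the quotient by the constants divides it by `|A|` once more.
-/

open Equiv.Perm

section Cycles

variable {α : Type*} {σ : Equiv.Perm α}

theorem sameCycle_iff_eq_or_eq_of_involutive (hσ : Function.Involutive σ) {a b : α} :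
    σ.SameCycle a b ↔ a = b ∨ σ a = b := by
  refine ⟨?_, ?_⟩
  · rintro ⟨i, rfl⟩
    have hsq : σ ^ (2 : ℤ) = 1 := Equiv.ext hσ
    obtain ⟨m, rfl | rfl⟩ := i.even_or_odd'
    · left; simp [zpow_mul, hsq]
    · right; simp [zpow_add, zpow_mul, hsq]
  · rintro (rfl | rfl)
    · exact SameCycle.refl σ a
    · exact sameCycle_apply_right.mpr (SameCycle.refl σ a)

-- Give weight `2` to fixed points and `1` to all other points: every cycle has total weight `2`.
theorem two_mul_card_cycles_of_involutive [Finite α] (hσ : Function.Involutive σ) :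
    2 * Nat.card (Quotient (SameCycle.setoid σ)) = Nat.card α + Nat.card {a | σ a = a} := by
  classical
  have := Fintype.ofFinite α
  have weight_cycle (q : Quotient (SameCycle.setoid σ)) :
      ∑ a with ⟦a⟧ = q, (1 + if σ a = a then 1 else 0) = 2 := by
    induction q using Quotient.inductionOn with | _ a
    have hcycle : ({b | ⟦b⟧ = (⟦a⟧ : Quotient (SameCycle.setoid σ))} : Finset α) = {a, σ a} := by
      ext b
      have hb : (⟦b⟧ : Quotient (SameCycle.setoid σ)) = ⟦a⟧ ↔ σ.SameCycle a b :=
        Quotient.eq.trans sameCycle_comm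
      rw [Finset.mem_filter_univ, hb, sameCycle_iff_eq_or_eq_of_involutive hσ]
      simp [eq_comm]
    rw [hcycle]
    by_cases ha : σ a = a
    · simp [ha]
    · rw [Finset.sum_pair (Ne.symm ha)]
      simp [ha]
  calc 2 * Nat.card (Quotient (SameCycle.setoid σ))
      = ∑ q : Quotient (SameCycle.setoid σ), ∑ a with ⟦a⟧ = q, (1 + if σ a = a then 1 else 0) := by
        simp [weight_cycle, mul_comm]
    _ = ∑ a, (1 + if σ a = a then 1 else 0) := Finset.sum_fiberwise _ _ _
    _ = Nat.card α + Nat.card {a | σ a = a} := by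
        simp [Finset.sum_add_distrib, Fintype.card_subtype]

end Cycles

section InvariantFunctions

variable {α : Type*} (σ : Equiv.Perm α) (A : Type*) [AddCommGroup A]

/-- The group of functions invariant under precomposition with `σ`, i.e. constant on its cycles. -/
def invariantFunctions : AddSubgroup (α → A) where
  carrier := {x | x ∘ σ = x}
  zero_mem' := rfl
  add_mem' := fun {x y} (hx : x ∘ σ = x) (hy : y ∘ σ = y) ↦ congrArg₂ (· + ·) hx hy
  neg_mem' := fun {x} (hx : x ∘ σ = x) ↦ congrArg (- ·) hx

variable {σ A}

theorem mem_invariantFunctions {x : α → A} : x ∈ invariantFunctions σ A ↔ x ∘ σ = x :=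
  Iff.rfl

theorem apply_eq_of_sameCycle {x : α → A} (hx : x ∈ invariantFunctions σ A) {a b : α}
    (hab : σ.SameCycle a b) : x a = x b := by
  obtain ⟨i, rfl⟩ := hab
  have step (c : α) : x (σ c) = x c := congrFun hx c
  induction i with
  | zero => rfl
  | succ n ih => rw [add_comm, zpow_one_add, mul_apply, step, ih]
  | pred n ih => rw [ih, ← step ((σ ^ (-n - 1 : ℤ)) a), ← mul_apply, ← zpow_one_add]; congr 3; ring

variable (σ A) in
/-- Invariant functions as functions on the set of cycles (fixed points count as cycles). -/
def invariantFunctionsEquiv :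
    invariantFunctions σ A ≃ (Quotient (SameCycle.setoid σ) → A) where
  toFun x := Quotient.lift x.1 fun _ _ ↦ apply_eq_of_sameCycle x.2
  invFun f := ⟨fun a ↦ f ⟦a⟧, funext fun a ↦
    congrArg f (Quotient.sound (sameCycle_apply_left.mpr (SameCycle.refl σ a)))⟩
  left_inv _ := rfl
  right_inv _ := funext fun q ↦ Quotient.inductionOn q fun _ ↦ rfl

theorem card_invariantFunctions [Finite α] :
    Nat.card (invariantFunctions σ A) = Nat.card A ^ Nat.card (Quotient (SameCycle.setoid σ)) := by
  rw [Nat.card_congr (invariantFunctionsEquiv σ A), Nat.card_fun]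

theorem single_mem_invariantFunctions [DecidableEq α] {p : α} (hp : σ p = p) (c : A) :
    Pi.single p c ∈ invariantFunctions σ A := by
  ext a
  have : σ a = p ↔ a = p := by rw [← σ.apply_eq_iff_eq (x := a), hp]
  simp [Pi.single_apply, this]

end InvariantFunctions

section SumZero

variable (α A : Type*) [Fintype α] [AddCommGroup A]

/-- The group of functions with sum zero: the group `V` of the main theorem when `A = ZMod 2`. -/
def sumZeroFunctions : AddSubgroup (α → A) :=
  (∑ i, Pi.evalAddMonoidHom (fun _ : α ↦ A) i).ker

variable {α A} {σ : Equiv.Perm α} {p : α}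

theorem mem_sumZeroFunctions {x : α → A} : x ∈ sumZeroFunctions α A ↔ ∑ i, x i = 0 := by
  simp [sumZeroFunctions, AddMonoidHom.mem_ker]

theorem comp_mem_sumZeroFunctions {x : α → A} (hx : x ∈ sumZeroFunctions α A) :
    x ∘ σ ∈ sumZeroFunctions α A := by
  rw [mem_sumZeroFunctions] at hx ⊢
  exact (Equiv.sum_comp σ x).trans hx

theorem const_mem_sumZeroFunctions {a : A} :
    Function.const α a ∈ sumZeroFunctions α A ↔ Fintype.card α • a = 0 := by
  simp [mem_sumZeroFunctions]

theorem card_invariant_sumZero_mul_card (hp : σ p = p) :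
    Nat.card {x : sumZeroFunctions α A | (x : α → A) ∘ σ = x} * Nat.card A =
      Nat.card (invariantFunctions σ A) := by
  classical
  let sum : invariantFunctions σ A →+ A :=
    (∑ i, Pi.evalAddMonoidHom (fun _ : α ↦ A) i).comp (invariantFunctions σ A).subtype
  have sum_surjective : Function.Surjective sum := fun c ↦
    ⟨⟨Pi.single p c, single_mem_invariantFunctions hp c⟩, by simp [sum]⟩
  have card_ker : Nat.card {x : sumZeroFunctions α A | (x : α → A) ∘ σ = x} = Nat.card sum.ker :=
    Nat.card_congr ⟨fun x ↦ ⟨⟨x.1, x.2⟩, x.1.2⟩, fun x ↦ ⟨⟨x.1, x.2⟩, x.1.2⟩,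
      fun _ ↦ rfl, fun _ ↦ rfl⟩
  rw [card_ker, ← sum.ker.card_mul_index, AddSubgroup.index_ker,
    AddMonoidHom.range_eq_top.mpr sum_surjective, AddSubgroup.card_top]

end SumZero

section FixedClasses

variable {α A : Type*} [Fintype α] [AddCommGroup A] {σ : Equiv.Perm α} {p : α}
  {W : AddSubgroup (sumZeroFunctions α A)}
  {σs : sumZeroFunctions α A ⧸ W → sumZeroFunctions α A ⧸ W}

theorem card_constants [Nonempty α] (hA : ∀ a : A, Fintype.card α • a = 0)
    (hW : ∀ v, v ∈ W ↔ ∃ a, (v : α → A) = Function.const α a) :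
    Nat.card W = Nat.card A := by
  let const (a : A) : W :=
    ⟨⟨Function.const α a, const_mem_sumZeroFunctions.mpr (hA a)⟩, (hW _).mpr ⟨a, rfl⟩⟩
  refine (Nat.card_eq_of_bijective const ⟨fun a b hab ↦ ?_, fun v ↦ ?_⟩).symm
  · exact Function.const_injective (congrArg (fun v : W ↦ (v.1 : α → A)) hab)
  · obtain ⟨a, ha⟩ := (hW v).mp v.2
    exact ⟨a, Subtype.ext (Subtype.ext ha.symm)⟩

theorem map_mk_eq_self_iff (hp : σ p = p)
    (hW : ∀ v ∈ W, ∃ a, (v : α → A) = Function.const α a)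
    (hσs : ∀ x y : sumZeroFunctions α A, (y : α → A) = (x : α → A) ∘ σ →
      σs (QuotientAddGroup.mk x) = QuotientAddGroup.mk y) (x : sumZeroFunctions α A) :
    σs (QuotientAddGroup.mk x) = QuotientAddGroup.mk x ↔ (x : α → A) ∘ σ = x := by
  refine ⟨fun hx ↦ ?_, fun hx ↦ hσs x x hx.symm⟩
  rw [hσs x ⟨_, comp_mem_sumZeroFunctions x.2⟩ rfl, QuotientAddGroup.eq] at hx
  obtain ⟨a, ha⟩ := hW _ hx
  have hdiff (i : α) : -(x : α → A) (σ i) + (x : α → A) i = a := congrFun ha i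
  have ha₀ : a = 0 := by simpa [hp] using (hdiff p).symm
  exact funext fun i ↦ neg_add_eq_zero.mp ((hdiff i).trans ha₀)

end FixedClasses

theorem mem_closure_one_iff_exists_const {α : Type*} {m : ℕ} {V : AddSubgroup (α → ZMod m)}
    (hone : 1 ∈ V) {v : V} :
    v ∈ AddSubgroup.closure {v : V | (v : α → ZMod m) = 1} ↔
      ∃ a, (v : α → ZMod m) = Function.const α a := by
  have hsingleton : {v : V | (v : α → ZMod m) = 1} = {⟨1, hone⟩} := by
    ext
    simp [Subtype.ext_iff]
  rw [hsingleton, AddSubgroup.mem_closure_singleton, ZMod.intCast_surjective.exists]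
  refine exists_congr fun n ↦ ?_
  rw [Subtype.ext_iff, eq_comm]
  simp [funext_iff]

theorem conj_fixed_spin_count_general {α A : Type*} [Fintype α] [AddCommGroup A] [Finite A]
    (hA : ∀ a : A, Fintype.card α • a = 0) {σ : Equiv.Perm α} {p : α} (hp : σ p = p) {c : ℕ}
    (hc : Nat.card (Quotient (SameCycle.setoid σ)) = c + 2)
    {V : AddSubgroup (α → A)} (hV : ∀ x, x ∈ V ↔ ∑ i, x i = 0)
    {W : AddSubgroup V} (hW : ∀ v : V, v ∈ W ↔ ∃ a, (v : α → A) = Function.const α a)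
    {σs : V ⧸ W → V ⧸ W}
    (hσs : ∀ x y : V, (y : α → A) = (x : α → A) ∘ σ →
      σs (QuotientAddGroup.mk x) = QuotientAddGroup.mk y) :
    Nat.card {z | σs z = z} = Nat.card A ^ c := by
  obtain rfl : V = sumZeroFunctions α A := by
    ext x
    rw [hV, mem_sumZeroFunctions]
  have : Nonempty α := ⟨p⟩
  have hpreimage : QuotientAddGroup.mk ⁻¹' {z | σs z = z} =
      {x : sumZeroFunctions α A | (x : α → A) ∘ σ = x} :=
    Set.ext (map_mk_eq_self_iff hp (fun v ↦ (hW v).mp) hσs)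
  have hcount : Nat.card A ^ 2 * Nat.card {z | σs z = z} = Nat.card A ^ 2 * Nat.card A ^ c := by
    calc Nat.card A ^ 2 * Nat.card {z | σs z = z}
        = Nat.card W * Nat.card {z | σs z = z} * Nat.card A := by
          rw [card_constants hA hW]; ring
      _ = Nat.card {x : sumZeroFunctions α A | (x : α → A) ∘ σ = x} * Nat.card A := by
          rw [← hpreimage, ← Nat.card_prod,
            Nat.card_congr (QuotientAddGroup.preimageMkEquivAddSubgroupProdSet W _)]
      _ = Nat.card A ^ 2 * Nat.card A ^ c := by
          rw [card_invariant_sumZero_mul_card hp, card_invariantFunctions, hc]; ring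
  exact Nat.eq_of_mul_eq_mul_left (pow_pos Nat.card_pos 2) hcount

/-- An involution `σ` of the `2g+2` branch points with exactly `2k` fixed points
(modelling complex conjugation on a hyperelliptic surface defined by a real polynomial
with `2k` real branch points) fixes exactly `2^{g+k-1}` elements of
`J = V ⧸ W ≅ (ℤ/2)^{2g}`, i.e. `2^{g+k-1}` two-spin structures. -/
theorem conj_fixed_spin_count (g k : ℕ) (hg : 1 ≤ g) (hk : 1 ≤ k) (hk' : k ≤ g + 1)
    (σ : Equiv.Perm (Fin (2 * g + 2)))
    (hinv : ∀ i, σ (σ i) = i)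
    (hfix : Nat.card {i : Fin (2 * g + 2) | σ i = i} = 2 * k)
    (V : AddSubgroup (Fin (2 * g + 2) → ZMod 2))
    (hV : ∀ x : Fin (2 * g + 2) → ZMod 2, x ∈ V ↔ ∑ i, x i = 0)
    (W : AddSubgroup ↥V)
    (hW : W = AddSubgroup.closure {v : ↥V | (v : Fin (2 * g + 2) → ZMod 2) = 1})
    (σs : (↥V ⧸ W) →+ (↥V ⧸ W))
    (hσs : ∀ x y : ↥V, (y : Fin (2 * g + 2) → ZMod 2) = (x : Fin (2 * g + 2) → ZMod 2) ∘ σ →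
      σs (QuotientAddGroup.mk x) = QuotientAddGroup.mk y) :
    Nat.card {z : ↥V ⧸ W | σs z = z} = 2 ^ (g + k - 1) := by
  obtain ⟨⟨p, hp⟩⟩ : Nonempty {i | σ i = i} := (Nat.card_pos_iff.mp (by omega)).1
  have hcycles : Nat.card (Quotient (SameCycle.setoid σ)) = g + k - 1 + 2 := by
    have := two_mul_card_cycles_of_involutive hinv
    rw [Nat.card_fin, hfix] at this
    omega
  have hcard : ((2 * g + 2 : ℕ) : ZMod 2) = 0 := (ZMod.natCast_eq_zero_iff _ _).mpr (by omega)
  have hconst (a : ZMod 2) : Fintype.card (Fin (2 * g + 2)) • a = 0 := by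
    rw [Fintype.card_fin, nsmul_eq_mul, hcard, zero_mul]
  have hone : (1 : Fin (2 * g + 2) → ZMod 2) ∈ V := (hV 1).mpr (by simpa using hcard)
  subst hW
  simpa using conj_fixed_spin_count_general hconst hp hcycles hV
    (fun _ ↦ mem_closure_one_iff_exists_const hone) hσs
end

section
/- Let g be odd and let σ be a fixed-point-free involution of Fin (2g+2) (so σ has exactly g+1 orbits, each of size 2; this models the antipodal symmetry τ(z) = −1/z̄ acting on the branch points). Then the subgroup of J generated by the images of the indicator functions of the g+1 orbits of σ (i.e., by the classes of the divisors p_i + τ(p_i) − 2·p_r) has cardinality 2^g, i.e., it is isomorphic to (ℤ/2)^g. (This is the group J₂^τ computed in the paper for a hyperelliptic surface of odd genus with the antipodal anti-holomorphic involution.) -/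
/-!
The functions constant on the fibres of a surjection `f : ι → κ` form the image of the injective
pullback `(κ → ZMod n) → (ι → ZMod n)`, under which the fibre indicators are the images of the
standard generators. The fibre indicators thus generate a group of order `n ^ |κ|`, which contains
the constants with values in `ZMod n`; dividing by these leaves `n ^ (|κ| - 1)` elements. The orbit
map of a fixed-point-free involution has `|κ| = |ι| / 2`, and for `n = 2` the indicator of a
two-element orbit sums to zero.
-/

section Quotient

open AddSubgroup

variable {G : Type*} [AddGroup G] {V : AddSubgroup G} {S : Set G}

theorem card_map_mk'_mul_card {W H : AddSubgroup G} [W.Normal] (hWH : W ≤ H) :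
    Nat.card (H.map (QuotientAddGroup.mk' W)) * Nat.card W = Nat.card H := by
  rw [← relIndex_ker, QuotientAddGroup.ker_mk', mul_comm, ← relIndex_bot_left W,
    ← relIndex_bot_left H, relIndex_mul_relIndex _ _ _ bot_le hWH]

theorem map_subtype_closure_preimage_val (hS : S ⊆ V) :
    (AddSubgroup.closure ((↑) ⁻¹' S : Set V)).map V.subtype = AddSubgroup.closure S := by
  rw [AddMonoidHom.map_closure]
  congr 1
  exact Set.image_preimage_eq_of_subset (hS.trans Subtype.range_coe.superset)

theorem card_map_mk'_closure_preimage_val_mul_card {W : AddSubgroup V} [W.Normal]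
    (hS : S ⊆ V) (hW : W.map V.subtype ≤ AddSubgroup.closure S) :
    Nat.card ((AddSubgroup.closure ((↑) ⁻¹' S : Set V)).map (QuotientAddGroup.mk' W)) *
      Nat.card W = Nat.card (AddSubgroup.closure S) := by
  rw [← map_subtype_closure_preimage_val hS] at hW ⊢
  rw [card_map_of_injective V.subtype_injective]
  exact card_map_mk'_mul_card ((map_le_map_iff_of_injective V.subtype_injective).mp hW)

end Quotient

section FiberIndicator

open AddSubgroup

variable {ι κ : Type*} {n : ℕ} {f : ι → κ}

theorem closure_range_single_one [Finite κ] [DecidableEq κ] :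
    AddSubgroup.closure (Set.range fun q : κ ↦ (Pi.single q 1 : κ → ZMod n)) = ⊤ := by
  refine (eq_top_iff' _).mpr fun x ↦ pi_mem_of_single_mem x fun q ↦ ?_
  have hx : (Pi.single q (x q) : κ → ZMod n) = ((x q).cast : ℤ) • Pi.single q 1 := by
    rw [← Pi.single_smul, zsmul_one, ZMod.intCast_zmod_cast]
  rw [hx]
  exact zsmul_mem (AddSubgroup.subset_closure (Set.mem_range_self q)) _

theorem closure_range_indicator_fiber [Finite κ] (f : ι → κ) :
    AddSubgroup.closure (Set.range fun q ↦ (f ⁻¹' {q}).indicator (1 : ι → ZMod n)) =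
      (LinearMap.funLeft ℤ (ZMod n) f).toAddMonoidHom.range := by
  classical
  rw [AddMonoidHom.range_eq_map, ← closure_range_single_one, AddMonoidHom.map_closure,
    ← Set.range_comp]
  congr! with q
  ext i
  simp [LinearMap.funLeft_apply, Set.indicator_apply, Pi.single_apply]

theorem one_mem_closure_range_indicator_fiber [Finite κ] (f : ι → κ) :
    1 ∈ AddSubgroup.closure (Set.range fun q ↦ (f ⁻¹' {q}).indicator (1 : ι → ZMod n)) := by
  rw [closure_range_indicator_fiber]
  exact ⟨1, rfl⟩

theorem card_closure_range_indicator_fiber [Finite κ] (hf : f.Surjective) :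
    Nat.card (AddSubgroup.closure (Set.range fun q ↦ (f ⁻¹' {q}).indicator (1 : ι → ZMod n))) =
      n ^ Nat.card κ := by
  have hinj := LinearMap.funLeft_injective_of_surjective ℤ (ZMod n) f hf
  rw [closure_range_indicator_fiber, ← Nat.card_congr (AddMonoidHom.ofInjective hinj).toEquiv,
    Nat.card_fun, Nat.card_zmod]

theorem card_map_mk'_closure_indicator_fiber_mul [Finite κ] [Nonempty ι] (hf : f.Surjective)
    {V : AddSubgroup (ι → ZMod n)} {W : AddSubgroup V}
    (hV : ∀ q, (f ⁻¹' {q}).indicator 1 ∈ V) (hW : W.map V.subtype = zmultiples 1) :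
    Nat.card ((AddSubgroup.closure
      ((↑) ⁻¹' Set.range fun q ↦ (f ⁻¹' {q}).indicator (1 : ι → ZMod n) : Set V)).map
        (QuotientAddGroup.mk' W)) * n = n ^ Nat.card κ := by
  have hone := zmultiples_le_of_mem (one_mem_closure_range_indicator_fiber (n := n) f)
  have hWcard : Nat.card W = n := by
    rw [← card_map_of_injective V.subtype_injective, hW, Nat.card_zmultiples]
    exact CharP.eq _ (CharP.addOrderOf_one _) (CharP.pi ι (ZMod n) n)
  have hcard :=
    card_map_mk'_closure_preimage_val_mul_card (Set.range_subset_iff.mpr hV) (hW.trans_le hone)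
  rwa [hWcard, card_closure_range_indicator_fiber hf] at hcard

end FiberIndicator

section Counting

variable {ι κ : Type*}

theorem card_eq_card_mul_of_ncard_fiber [Finite ι] [Finite κ] {f : ι → κ} {k : ℕ}
    (hf : ∀ q, (f ⁻¹' {q}).ncard = k) : Nat.card ι = Nat.card κ * k := by
  have := Fintype.ofFinite κ
  calc Nat.card ι = Nat.card (Σ q, {i // f i = q}) :=
        Nat.card_congr (Equiv.sigmaFiberEquiv f).symm
    _ = ∑ q, (f ⁻¹' {q}).ncard := Nat.card_sigma
    _ = Nat.card κ * k := by simp [hf]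

theorem sum_indicator_pair_one [Fintype ι] {R : Type*} [AddCommMonoidWithOne R] [CharP R 2]
    {i j : ι} (hij : i ≠ j) : ∑ k, ({i, j} : Set ι).indicator (1 : ι → R) k = 0 := by
  classical
  rw [← Finset.coe_pair, Finset.sum_indicator_subset _ (Finset.subset_univ _),
    Finset.sum_pair hij]
  exact one_add_one_eq_two.trans CharTwo.two_eq_zero

end Counting

section Involution

open Equiv.Perm

variable {ι : Type*} {σ : Equiv.Perm ι}

theorem sameCycle_iff_of_involutive (hinv : Function.Involutive σ) {i j : ι} :
    σ.SameCycle i j ↔ j = i ∨ j = σ i := by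
  have hsq : σ ^ (2 : ℤ) = 1 := Equiv.ext hinv
  constructor
  · rintro ⟨k, rfl⟩
    obtain ⟨m, rfl | rfl⟩ := Int.even_or_odd' k
    · simp [zpow_mul, hsq]
    · simp [zpow_add, zpow_mul, hsq]
  · rintro (rfl | rfl)
    · rfl
    · exact sameCycle_apply_right.mpr .rfl

theorem mk_preimage_mk_of_involutive (hinv : Function.Involutive σ) (i : ι) :
    Quotient.mk (SameCycle.setoid σ) ⁻¹' {Quotient.mk _ i} = {i, σ i} := by
  ext j
  exact Quotient.eq.trans (sameCycle_comm.trans (sameCycle_iff_of_involutive hinv))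

theorem card_eq_card_orbits_mul_two [Finite ι] (hfree : ∀ i, σ i ≠ i)
    (hinv : Function.Involutive σ) :
    Nat.card ι = Nat.card (Quotient (SameCycle.setoid σ)) * 2 :=
  card_eq_card_mul_of_ncard_fiber <| Quotient.ind fun i ↦ by
    rw [mk_preimage_mk_of_involutive hinv, Set.ncard_pair (hfree i).symm]

theorem range_indicator_orbit_of_involutive {R : Type*} [Zero R] [One R]
    (hinv : Function.Involutive σ) :
    (Set.range fun q ↦ (Quotient.mk (SameCycle.setoid σ) ⁻¹' {q}).indicator (1 : ι → R)) =
      Set.range fun i ↦ ({i, σ i} : Set ι).indicator 1 := by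
  rw [← Quotient.mk_surjective.range_comp]
  simp only [Function.comp_def, mk_preimage_mk_of_involutive hinv]

theorem card_map_mk'_closure_indicator_orbit_mul [Finite ι] [Nonempty ι] {n : ℕ}
    (hfree : ∀ i, σ i ≠ i) (hinv : Function.Involutive σ)
    {V : AddSubgroup (ι → ZMod n)} {W : AddSubgroup V}
    (hV : ∀ i, ({i, σ i} : Set ι).indicator 1 ∈ V)
    (hW : W.map V.subtype = AddSubgroup.zmultiples 1) :
    Nat.card ((AddSubgroup.closure
      ((↑) ⁻¹' Set.range fun i ↦ ({i, σ i} : Set ι).indicator (1 : ι → ZMod n) : Set V)).map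
        (QuotientAddGroup.mk' W)) * n = n ^ (Nat.card ι / 2) := by
  rw [← range_indicator_orbit_of_involutive hinv,
    card_map_mk'_closure_indicator_fiber_mul Quotient.mk_surjective _ hW,
    card_eq_card_orbits_mul_two hfree hinv, Nat.mul_div_cancel _ two_pos]
  exact Quotient.ind fun i ↦ by rw [mk_preimage_mk_of_involutive hinv]; exact hV i

end Involution

theorem setOf_mk_indicator_pair_eq_image {ι R : Type*} [DecidableEq ι] [AddCommGroupWithOne R]
    (τ : ι → ι) {V : AddSubgroup (ι → R)} (W : AddSubgroup V) :
    {z : V ⧸ W | ∃ (i : ι) (v : V),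
      (∀ j, (v : ι → R) j = if j = i ∨ j = τ i then 1 else 0) ∧ z = QuotientAddGroup.mk v} =
      QuotientAddGroup.mk' W ''
        ((↑) ⁻¹' Set.range fun i ↦ ({i, τ i} : Set ι).indicator (1 : ι → R)) := by
  have hind (i : ι) (v : V) : (∀ j, (v : ι → R) j = if j = i ∨ j = τ i then 1 else 0) ↔
      ({i, τ i} : Set ι).indicator 1 = (v : ι → R) := by
    simp [funext_iff, Set.indicator_apply, eq_comm]
  ext z
  simp only [hind, Set.mem_ofPred_eq, Set.mem_image, Set.mem_preimage, Set.mem_range]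
  constructor
  · rintro ⟨i, v, hv, rfl⟩
    exact ⟨v, ⟨i, hv⟩, rfl⟩
  · rintro ⟨v, ⟨i, hv⟩, rfl⟩
    exact ⟨i, v, hv, rfl⟩

theorem antipodal_orbit_subgroup_card_general {ι : Type*} [Fintype ι] [DecidableEq ι] {g : ℕ}
    (hι : Fintype.card ι = 2 * g + 2) (σ : Equiv.Perm ι) (hfree : ∀ i, σ i ≠ i)
    (hinv : Function.Involutive σ) (V : AddSubgroup (ι → ZMod 2))
    (hV : ∀ x, x ∈ V ↔ ∑ i, x i = 0) (W : AddSubgroup V)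
    (hW : W = AddSubgroup.closure {v : V | (v : ι → ZMod 2) = 1}) :
    Nat.card (AddSubgroup.closure {z : V ⧸ W | ∃ (i : ι) (v : V),
      (∀ j, (v : ι → ZMod 2) j = if j = i ∨ j = σ i then 1 else 0) ∧
        z = QuotientAddGroup.mk v}) = 2 ^ g := by
  have : Nonempty ι := Fintype.card_pos_iff.mp (by lia)
  have horbit (i : ι) : ({i, σ i} : Set ι).indicator 1 ∈ V :=
    (hV _).mpr (sum_indicator_pair_one (hfree i).symm)
  have hone : (1 : ι → ZMod 2) ∈ V := (hV 1).mpr <| by simp [hι, CharTwo.two_eq_zero]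
  have hconst : W.map V.subtype = AddSubgroup.zmultiples 1 := by
    rw [hW, AddSubgroup.zmultiples_eq_closure,
      ← map_subtype_closure_preimage_val (Set.singleton_subset_iff.mpr hone)]
    rfl
  have hcard := card_map_mk'_closure_indicator_orbit_mul hfree hinv horbit hconst
  have hhalf : Nat.card ι / 2 = g + 1 := by rw [Nat.card_eq_fintype_card]; lia
  rw [hhalf, pow_succ, AddMonoidHom.map_closure, ← setOf_mk_indicator_pair_eq_image] at hcard
  exact Nat.eq_of_mul_eq_mul_right two_pos hcard

/-- For a hyperelliptic surface of odd genus `g` with the antipodal symmetry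
(a fixed-point-free involution `σ` of the `2g+2` branch points), the subgroup
of `J = V ⧸ W` generated by the classes of the indicator functions of the `g+1`
orbits of `σ` (the divisors `p_i + τ(p_i) - 2·p_r`) has cardinality `2^g`. -/
theorem antipodal_orbit_subgroup_card (g : ℕ) (hg : Odd g)
    (σ : Equiv.Perm (Fin (2 * g + 2)))
    (hfree : ∀ i, σ i ≠ i)
    (hinv : ∀ i, σ (σ i) = i)
    (V : AddSubgroup (Fin (2 * g + 2) → ZMod 2))
    (hV : ∀ x : Fin (2 * g + 2) → ZMod 2, x ∈ V ↔ ∑ i, x i = 0)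
    (W : AddSubgroup ↥V)
    (hW : W = AddSubgroup.closure {v : ↥V | (v : Fin (2 * g + 2) → ZMod 2) = 1}) :
    Nat.card (AddSubgroup.closure {z : ↥V ⧸ W | ∃ (i : Fin (2 * g + 2)) (v : ↥V),
        (∀ j, (v : Fin (2 * g + 2) → ZMod 2) j = if j = i ∨ j = σ i then 1 else 0) ∧
        z = QuotientAddGroup.mk v}) = 2 ^ g :=
  antipodal_orbit_subgroup_card_general (Fintype.card_fin _) σ hfree hinv V hV W hW
end

section
/- Let g ≥ 1, let n be an odd positive integer, and let σ be a permutation of Fin (2g+2) every orbit of which has exactly n elements (so n divides 2g+2 and σ fixes no points; this models an automorphism of odd order n of a hyperelliptic surface fixing no branch points). Then the subgroup of σ*-fixed elements {y ∈ J : σ* y = y} has cardinality 2^{(2g+2)/n − 2}. (This is the statement that an odd-order automorphism of a hyperelliptic Riemann surface of genus g fixing no branch points fixes exactly 2^{(2g+2)/n − 2} two-spin structures.) -/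
/-!
Let `r` be the number of cycles of `σ`. A class of `J` fixed by `σ*` is represented by some `x` with
`x ∘ σ = x + c`, `c` constant. Going once around a cycle of length `k` gives `k • c = 0`, so `c = 0`
as soon as some `k` is prime to the order of the coefficient group `A`: every representative of a
fixed class is constant on the cycles of `σ`. There are `|A| ^ r` functions constant on the cycles;
requiring the coordinates to sum to zero and dividing by the constants each cost one factor `|A|`.
-/

open Function Equiv.Perm

variable {ι A : Type*}

theorem minimalPeriod_eq_of_forall_lt {f : ι → ι} {i : ι} {n : ℕ} (hn : 0 < n)
    (hper : IsPeriodicPt f n i) (hlt : ∀ m, 0 < m → m < n → ¬IsPeriodicPt f m i) :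
    minimalPeriod f i = n :=
  (hper.minimalPeriod_le hn).antisymm <| not_lt.1 fun h =>
    hlt _ (hper.minimalPeriod_pos hn) h (isPeriodicPt_minimalPeriod f i)

section Cycles

variable (σ : Equiv.Perm ι)

theorem card_sameCycle_eq_minimalPeriod (i : ι) :
    Nat.card {j // σ.SameCycle i j} = minimalPeriod σ i := by
  have mem_orbit_iff (j : ι) :
      σ.SameCycle i j ↔ j ∈ MulAction.orbit (Subgroup.zpowers σ) i := by
    simp [SameCycle, MulAction.mem_orbit_iff, Subgroup.exists_zpowers, Subgroup.smul_def]
  calc Nat.card {j // σ.SameCycle i j}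
      = Nat.card (MulAction.orbit (Subgroup.zpowers σ) i) :=
        Nat.card_congr (Equiv.subtypeEquivRight mem_orbit_iff)
    _ = Nat.card (ZMod (minimalPeriod (σ • ·) i)) :=
        Nat.card_congr (MulAction.orbitZPowersEquiv σ i)
    _ = minimalPeriod σ i := Nat.card_zmod _

theorem card_quotient_sameCycle_mul_eq_card [Finite ι] {n : ℕ}
    (h : ∀ i, minimalPeriod σ i = n) :
    Nat.card (Quotient (SameCycle.setoid σ)) * n = Nat.card ι := by
  have := Fintype.ofFinite (Quotient (SameCycle.setoid σ))
  have card_fiber (q : Quotient (SameCycle.setoid σ)) :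
      Nat.card {j // Quotient.mk (SameCycle.setoid σ) j = q} = n := by
    induction q using Quotient.inductionOn with
    | h i =>
      rw [← h i, ← card_sameCycle_eq_minimalPeriod]
      exact Nat.card_congr (Equiv.subtypeEquivRight fun j => Quotient.eq.trans sameCycle_comm)
  rw [← Nat.card_congr (Equiv.sigmaFiberEquiv (Quotient.mk (SameCycle.setoid σ))), Nat.card_sigma]
  simp only [card_fiber, Finset.sum_const, Finset.card_univ, smul_eq_mul, Nat.card_eq_fintype_card]

end Cycles

section Invariants

variable [AddCommGroup A]

/-- The group of `A`-valued functions that are constant on the cycles of `σ`, encoded as those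
unchanged by precomposition with `σ`; these represent the fixed classes of `J`. -/
def cycleInvariants (A : Type*) [AddCommGroup A] (σ : Equiv.Perm ι) : AddSubgroup (ι → A) where
  carrier := {x | x ∘ σ = x}
  zero_mem' := rfl
  add_mem' hx hy := congrArg₂ (· + ·) hx hy
  neg_mem' hx := congrArg (- ·) hx

theorem mem_cycleInvariants {σ : Equiv.Perm ι} {x : ι → A} :
    x ∈ cycleInvariants A σ ↔ x ∘ σ = x :=
  Iff.rfl

theorem mem_cycleInvariants_iff_le_ker {σ : Equiv.Perm ι} {x : ι → A} :
    x ∈ cycleInvariants A σ ↔ SameCycle.setoid σ ≤ Setoid.ker x := by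
  refine ⟨fun hx i j hij => ?_, fun hx => funext fun i => ?_⟩
  · obtain ⟨k, rfl⟩ := hij
    -- `Perm ι` acts on functions by precomposition through `DomMulAct`, and stabilizers are groups.
    have hσ : DomMulAct.mk σ ∈ MulAction.stabilizer (Equiv.Perm ι)ᵈᵐᵃ x := hx
    exact (congrFun (zpow_mem hσ k) i).symm
  · exact hx (sameCycle_apply_left.2 (SameCycle.refl σ i))

theorem card_cycleInvariants [Finite ι] (σ : Equiv.Perm ι) :
    Nat.card (cycleInvariants A σ) = Nat.card A ^ Nat.card (Quotient (SameCycle.setoid σ)) := by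
  rw [← Nat.card_fun]
  exact Nat.card_congr <| (Equiv.subtypeEquivRight fun _ => mem_cycleInvariants_iff_le_ker).trans
    (Setoid.liftEquiv _)

theorem const_eq_zero_of_comp_eq_add_const {f : ι → ι} {i : ι}
    (hcop : (Nat.card A).Coprime (minimalPeriod f i)) {x : ι → A} {c : A}
    (hx : x ∘ f = x + const ι c) : c = 0 := by
  have hsemi : Semiconj x f (· + c) := fun j => congrFun hx j
  have hround : x i = x i + minimalPeriod f i • c := by
    simpa only [iterate_minimalPeriod, add_right_iterate] using
      (hsemi.iterate_right (minimalPeriod f i)).eq i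
  exact hcop.nsmul_right_bijective.injective <| by simpa using hround

theorem exists_mem_cycleInvariants_sum_eq [Fintype ι] {σ : Equiv.Perm ι} {i : ι}
    (hcop : (Nat.card A).Coprime (minimalPeriod σ i)) (a : A) :
    ∃ x ∈ cycleInvariants A σ, ∑ j, x j = a := by
  classical
  obtain ⟨b, hb : minimalPeriod σ i • b = a⟩ := hcop.nsmul_right_bijective.surjective a
  refine ⟨fun j => if σ.SameCycle i j then b else 0, ?_, ?_⟩
  · simp only [mem_cycleInvariants, funext_iff, comp_apply, sameCycle_apply_right, implies_true]
  · rw [← Finset.sum_filter, Finset.sum_const, ← Fintype.card_subtype, ← Nat.card_eq_fintype_card,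
      card_sameCycle_eq_minimalPeriod, hb]

theorem card_cycleInvariants_sum_eq_zero_mul_card [Fintype ι] {σ : Equiv.Perm ι} {i : ι}
    (hcop : (Nat.card A).Coprime (minimalPeriod σ i)) :
    Nat.card {x : ι → A // ∑ j, x j = 0 ∧ x ∘ σ = x} * Nat.card A =
      Nat.card A ^ Nat.card (Quotient (SameCycle.setoid σ)) := by
  let coordSum : cycleInvariants A σ →+ A :=
    (∑ j, Pi.evalAddMonoidHom (fun _ => A) j).comp (cycleInvariants A σ).subtype
  have coordSum_apply (x : cycleInvariants A σ) : coordSum x = ∑ j, x.1 j := by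
    simp [coordSum]
  have coordSum_surjective : Surjective coordSum := fun a => by
    obtain ⟨x, hx, hxa⟩ := exists_mem_cycleInvariants_sum_eq hcop a
    exact ⟨⟨x, hx⟩, (coordSum_apply _).trans hxa⟩
  have card_ker : Nat.card coordSum.ker = Nat.card {x : ι → A // ∑ j, x j = 0 ∧ x ∘ σ = x} :=
    Nat.card_congr <| calc
      coordSum.ker ≃ {x : cycleInvariants A σ // ∑ j, x.1 j = 0} :=
        Equiv.subtypeEquivRight fun x => by rw [AddMonoidHom.mem_ker, coordSum_apply]
      _ ≃ {x : ι → A // x ∈ cycleInvariants A σ ∧ ∑ j, x j = 0} :=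
        Equiv.subtypeSubtypeEquivSubtypeInter _ fun x : ι → A => ∑ j, x j = 0
      _ ≃ {x : ι → A // ∑ j, x j = 0 ∧ x ∘ σ = x} :=
        Equiv.subtypeEquivRight fun _ => and_comm
  rw [← card_ker, ← card_cycleInvariants, ← coordSum.ker.card_mul_index,
    AddSubgroup.index_ker, AddMonoidHom.range_eq_top.2 coordSum_surjective, AddSubgroup.card_top]

end Invariants

theorem closure_one_eq_range_const_addSubgroupOf {m : ℕ} {V : AddSubgroup (ι → ZMod m)}
    (h1 : 1 ∈ V) :
    AddSubgroup.closure {v : V | (v : ι → ZMod m) = 1} =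
      (Pi.constAddMonoidHom ι (ZMod m)).range.addSubgroupOf V := by
  have singleton_one : {v : V | (v : ι → ZMod m) = 1} = {⟨1, h1⟩} :=
    Set.ext fun v => by simp [Subtype.ext_iff]
  have zsmul_one (k : ℤ) : k • (1 : ι → ZMod m) = const ι (k : ZMod m) :=
    funext fun _ => by simp
  ext v
  simp only [singleton_one, AddSubgroup.mem_closure_singleton, AddSubgroup.mem_addSubgroupOf,
    AddMonoidHom.mem_range, Subtype.ext_iff, AddSubgroup.coe_zsmul, zsmul_one,
    (ZMod.intCast_surjective (n := m)).exists]
  rfl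

theorem card_range_const_addSubgroupOf [Nonempty ι] [AddGroup A] {V : AddSubgroup (ι → A)}
    (hV : ∀ a : A, const ι a ∈ V) :
    Nat.card ((Pi.constAddMonoidHom ι A).range.addSubgroupOf V) = Nat.card A := by
  have range_le : (Pi.constAddMonoidHom ι A).range ≤ V := by
    rintro _ ⟨a, rfl⟩
    exact hV a
  calc Nat.card ((Pi.constAddMonoidHom ι A).range.addSubgroupOf V)
      = Nat.card (Pi.constAddMonoidHom ι A).range :=
        Nat.card_congr (AddSubgroup.addSubgroupOfEquivOfLe range_le).toEquiv
    _ = Nat.card A :=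
        Nat.card_congr (AddMonoidHom.ofInjective const_injective).toEquiv.symm

theorem mk_comp_eq_mk_iff [AddCommGroup A] {f : ι → ι} {i : ι}
    (hcop : (Nat.card A).Coprime (minimalPeriod f i)) {V : AddSubgroup (ι → A)} {v w : V}
    (hw : (w : ι → A) = v ∘ f) :
    (w : V ⧸ (Pi.constAddMonoidHom ι A).range.addSubgroupOf V) = v ↔ (v : ι → A) ∘ f = v := by
  rw [eq_comm, QuotientAddGroup.eq, AddSubgroup.mem_addSubgroupOf]
  constructor
  · rintro ⟨c, hc⟩
    have hvf : (v : ι → A) ∘ f = v + const ι c := by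
      rw [← hw]
      exact (add_eq_of_eq_neg_add hc).symm
    rw [hvf, const_eq_zero_of_comp_eq_add_const hcop hvf, const_zero, add_zero]
  · intro hv
    rw [Subtype.ext (hw.trans hv), neg_add_cancel]
    exact zero_mem _

theorem card_preimage_quotientAddGroup_mk {G : Type*} [AddGroup G] (H : AddSubgroup G)
    (t : Set (G ⧸ H)) :
    Nat.card ((QuotientAddGroup.mk : G → G ⧸ H) ⁻¹' t) = Nat.card H * Nat.card t := by
  rw [Nat.card_congr (QuotientAddGroup.preimageMkEquivAddSubgroupProdSet H t), Nat.card_prod]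

theorem eq_pow_sub_of_mul_pow_eq_pow {a b k r : ℕ} (ha : 0 < a) (h : b * a ^ k = a ^ r) :
    b = a ^ (r - k) := by
  obtain rfl | ha1 : a = 1 ∨ 1 < a := by lia
  · simpa using h
  · have hkr : k ≤ r := (Nat.pow_dvd_pow_iff_le_right ha1).1 (Dvd.intro_left b h)
    rw [← Nat.pow_div hkr ha, ← h, Nat.mul_div_cancel _ (pow_pos ha k)]

/-- The subtraction in the exponent truncates only when `A` is trivial. -/
theorem odd_auto_no_fixed_spin_count_general [Fintype ι] [AddCommGroup A] [Finite A]
    (hA : ∀ a : A, Fintype.card ι • a = 0) (σ : Equiv.Perm ι) {i : ι}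
    (hcop : (Nat.card A).Coprime (minimalPeriod σ i))
    (V : AddSubgroup (ι → A)) (hV : ∀ x : ι → A, x ∈ V ↔ ∑ j, x j = 0)
    (W : AddSubgroup V) (hW : W = (Pi.constAddMonoidHom ι A).range.addSubgroupOf V)
    (σs : V ⧸ W → V ⧸ W)
    (hσs : ∀ x y : V, (y : ι → A) = (x : ι → A) ∘ σ →
      σs (QuotientAddGroup.mk x) = QuotientAddGroup.mk y) :
    Nat.card {z : V ⧸ W | σs z = z} =
      Nat.card A ^ (Nat.card (Quotient (SameCycle.setoid σ)) - 2) := by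
  subst hW
  have : Nonempty ι := ⟨i⟩
  have const_mem (a : A) : const ι a ∈ V := by simp [hV, hA]
  have comp_mem (v : V) : (v : ι → A) ∘ σ ∈ V := by
    rw [hV, ← (hV v).1 v.2]
    exact Equiv.sum_comp σ (v : ι → A)
  have preimage_fixed : QuotientAddGroup.mk ⁻¹' {z | σs z = z} = {v : V | (v : ι → A) ∘ σ = v} :=
    Set.ext fun v => by
      rw [Set.mem_preimage, Set.mem_ofPred_eq, hσs v ⟨_, comp_mem v⟩ rfl]
      exact mk_comp_eq_mk_iff hcop rfl
  have card_invariant : Nat.card {v : V | (v : ι → A) ∘ σ = v} =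
      Nat.card {x : ι → A // ∑ j, x j = 0 ∧ x ∘ σ = x} :=
    Nat.card_congr <| (Equiv.subtypeSubtypeEquivSubtypeInter _ fun x : ι → A => x ∘ σ = x).trans
      (Equiv.subtypeEquivRight fun x => and_congr_left' (hV x))
  have hcount := card_cycleInvariants_sum_eq_zero_mul_card hcop
  rw [← card_invariant, ← preimage_fixed, card_preimage_quotientAddGroup_mk,
    card_range_const_addSubgroupOf const_mem] at hcount
  refine eq_pow_sub_of_mul_pow_eq_pow Nat.card_pos ?_
  rw [← hcount]
  ring

/-- An odd-order automorphism of a hyperelliptic surface of genus `g` fixing no branch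
points (modelled as a permutation `σ` of the `2g+2` branch points all of whose orbits
have exactly `n` elements, `n` odd) fixes exactly `2^{(2g+2)/n - 2}` two-spin
structures, i.e. elements of `J = V ⧸ W`. -/
theorem odd_auto_no_fixed_spin_count (g n : ℕ) (hg : 1 ≤ g) (hn : Odd n) (hn' : 0 < n)
    (σ : Equiv.Perm (Fin (2 * g + 2)))
    (horb : ∀ i : Fin (2 * g + 2),
      (σ ^ n) i = i ∧ ∀ m : ℕ, 0 < m → m < n → (σ ^ m) i ≠ i)
    (V : AddSubgroup (Fin (2 * g + 2) → ZMod 2))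
    (hV : ∀ x : Fin (2 * g + 2) → ZMod 2, x ∈ V ↔ ∑ i, x i = 0)
    (W : AddSubgroup ↥V)
    (hW : W = AddSubgroup.closure {v : ↥V | (v : Fin (2 * g + 2) → ZMod 2) = 1})
    (σs : (↥V ⧸ W) →+ (↥V ⧸ W))
    (hσs : ∀ x y : ↥V, (y : Fin (2 * g + 2) → ZMod 2) = (x : Fin (2 * g + 2) → ZMod 2) ∘ σ →
      σs (QuotientAddGroup.mk x) = QuotientAddGroup.mk y) :
    Nat.card {z : ↥V ⧸ W | σs z = z} = 2 ^ ((2 * g + 2) / n - 2) := by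
  simp only [← iterate_eq_pow] at horb
  have hperiod (i : Fin (2 * g + 2)) : minimalPeriod σ i = n :=
    minimalPeriod_eq_of_forall_lt hn' (horb i).1 (horb i).2
  have hcycles : Nat.card (Quotient (SameCycle.setoid σ)) = (2 * g + 2) / n :=
    Nat.eq_div_of_mul_eq_left hn'.ne' <| by
      rw [card_quotient_sameCycle_mul_eq_card σ hperiod, Nat.card_fin]
  have htwo (a : ZMod 2) : Fintype.card (Fin (2 * g + 2)) • a = 0 := by
    rw [Fintype.card_fin, ← mul_add_one, mul_smul, CharTwo.two_nsmul]
  have hone : 1 ∈ V := by simpa using (hV 1).2 (by simpa using htwo 1)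
  have hcop : (Nat.card (ZMod 2)).Coprime (minimalPeriod σ 0) := by
    rw [Nat.card_zmod, hperiod]
    exact hn.coprime_two_left
  rw [closure_one_eq_range_const_addSubgroupOf hone] at hW
  rw [odd_auto_no_fixed_spin_count_general htwo σ hcop V hV W hW σs hσs, hcycles, Nat.card_zmod]
end
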